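/- Main coupling on l-configurations: let 2 ≤ k < l, write l = kd + r with d ≥ 1 and 1 ≤ r ≤ k, set M = max(l, k(k−1)/2), Ψ₁ = φ_k^M, Ψ = φ_k^{l−k} ∘ φ_l^{dr + k d(d−1)/2} ∘ φ_k^{k−r}, and Ψ₂ = Ψ^{k−1}. Then for every l-configuration X, Ψ₂(Ψ₁(X)) = X_0, where X_0 = [k, …, k, r] is the l-configuration with d consecutive bins of k balls followed by a rightmost bin with r balls. In particular, the algorithm Ψ₂Ψ₁ couples the first l balls on l-configurations. -/

import Mathlib

/-! Place a configuration on `ℤ` and encode it by its height function `G p`, the number of balls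
at positions `≥ p`. On `l`-configurations the move `φ_k` becomes the local, translation-invariant
rule `G p ↦ min l (G p + [k ≤ G (p - 1)])` (`stepG`, `HasHeight.moveFin_step`). The distinguished
configurations `X_i` are the functions `xst l k c : p ↦ min l (c - k p)₊`, on which `φ_k` acts by
`c ↦ c + 1`; `X_i` corresponds to `c ≡ l - i` modulo `k`, with `0 ≤ i < k`.

Two facts carry the argument. If the `k` rightmost balls lie in the two rightmost bins `z - 1`, `z`,
then `φ_k^{l-k}` produces a distinguished configuration that depends only on `G z`
(`iter_eq_xst`). And `φ_l` reduces the total deficit `∑_{p ≤ z} (l - G p)` by exactly one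
(`iter_level`). The number of `φ_l`-moves in `Ψ` is the deficit of `[r, k, …, k]`, the least
possible one for bins of size at most `k`, so levelling never opens a new bin, and the number `J` of
balls it puts into the rightmost bin is bounded below by an exact deficit count (`levelG_eq`).
For `X_i` this shows that `Ψ X_i = X_{i'}` with `i' ≤ i - 1` (truncated) and `i' ≤ k - 1 - d`
(`psiG_xst`).

It remains to enter the cycle of the `X_i`. The configuration `Ψ₁ X` need not be distinguished
(for `k = 10`, `l = 20` the configuration `[1, …, 1]` leads to `[1, 9, 10]`), but its bins have at
most `k` balls and its `k` rightmost balls lie in two bins, so the first `Ψ` gives some `X_i` with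
`i ≤ k - 1`. If `d ≥ 2` and `k ≥ 3`, the second `Ψ` already reaches `i ≤ k - 3`, which makes up for
the lost step; if `d = 1` or `k = 2`, timing the arrival of the `k`-th ball at position `-1` gives
`i ≤ k - 2` after the first `Ψ` (`first_level`). In both cases `k - 1` applications lead to `X_0`. -/

open Finset

/-! Bins are indexed by `t : ℕ`, where index `t` stands for the bin labeled `-t`
in the paper (so `t = 0` is the rightmost bin).  A configuration is a function
`X : ℕ → ℕ`, `X t` being the number of balls in bin `t`. -/

/-- `binSum X t` is the number of balls in bins `0, …, t-1`, i.e. strictly to the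
right of bin `t`.  In the paper's notation this is `Σ_{j = -t+1}^{0} X(j)`. -/
def binSum (X : ℕ → ℕ) (t : ℕ) : ℕ := ∑ m ∈ Finset.range t, X m

/-- An infinite configuration: every bin contains a positive number of balls. -/
def IsInfConf (X : ℕ → ℕ) : Prop := ∀ t, 0 < X t

/-- An `n`-configuration: for some `p ≥ 1`, bins `0, …, p-1` are nonempty, all the
other bins are empty, and the total number of balls is `n`. -/
def IsNConf (n : ℕ) (X : ℕ → ℕ) : Prop :=
  ∃ p : ℕ, 1 ≤ p ∧ (∀ t, t < p → 0 < X t) ∧ (∀ t, p ≤ t → X t = 0) ∧ binSum X p = n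

/-- The `n`-ball projection `π_n`: keep the `n` rightmost balls, erase the others.
(Truncated subtraction makes the value `0` as soon as `binSum X t ≥ n`.) -/
def proj (n : ℕ) (X : ℕ → ℕ) : ℕ → ℕ := fun t => min (X t) (n - binSum X t)

/-- The move `φ_k` on infinite configurations: if the rightmost bin contains at
least `k` balls, create a new rightmost bin containing one ball (shifting
everything); otherwise add one ball to the bin immediately to the right of the
bin containing the `k`-th ball counted from the right. -/
noncomputable def move (k : ℕ) (X : ℕ → ℕ) : ℕ → ℕ :=
  if k ≤ X 0 then fun t => if t = 0 then 1 else X (t - 1)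
  else fun t => if t = sInf {b : ℕ | k ≤ binSum X (b + 1)} - 1 then X t + 1 else X t

/-- Delete one ball from the leftmost nonempty bin. -/
noncomputable def removeLeft (X : ℕ → ℕ) : ℕ → ℕ :=
  fun t => if t = sSup {b : ℕ | 0 < X b} then X t - 1 else X t

/-- The move `φ_k` on `n`-configurations: add a ball to the bin immediately to the
right of the bin containing the `k`-th ball from the right (creating a new
rightmost bin if needed), then delete one ball from the leftmost nonempty bin. -/
noncomputable def moveFin (k : ℕ) (X : ℕ → ℕ) : ℕ → ℕ := removeLeft (move k X)

/-- Apply an algorithm, i.e. a finite composition of moves, to an infinite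
configuration.  `applyAlg [k₁, …, kₘ] X = φ_{k₁}(φ_{k₂}(⋯ φ_{kₘ}(X)))`. -/
noncomputable def applyAlg (w : List ℕ) (X : ℕ → ℕ) : ℕ → ℕ := w.foldr move X

/-- Apply an algorithm to a finite configuration. -/
noncomputable def applyAlgFin (w : List ℕ) (X : ℕ → ℕ) : ℕ → ℕ := w.foldr moveFin X

/-- The configuration denoted `[a₁, …, a_p]` in the paper: the list is read from
the leftmost nonempty bin to the rightmost bin. -/
def ofList (L : List ℕ) : ℕ → ℕ := fun t => L.reverse.getD t 0

/-- The distinguished `l`-configurations `X_i` (for `l = k*d + r`, `1 ≤ r ≤ k`):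
`X_0 = [k, …, k, r]` (`d` bins of `k` balls), `X_i = [i, k, …, k, r-i]` (`d` bins
of `k` balls) for `1 ≤ i ≤ r-1`, and `X_i = [i, k, …, k, k+r-i]` (`d-1` bins of
`k` balls) for `r ≤ i ≤ k-1`. -/
def distConf (k d r i : ℕ) : ℕ → ℕ :=
  if i = 0 then ofList (List.replicate d k ++ [r])
  else if i < r then ofList (i :: (List.replicate d k ++ [r - i]))
  else ofList (i :: (List.replicate (d - 1) k ++ [k + r - i]))

/-- The `l`-configurations `Y_j`: `Y_0 = [l]` and `Y_j = [j, l-j]` for `1 ≤ j ≤ l-1`. -/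
def yConf (l j : ℕ) : ℕ → ℕ := if j = 0 then ofList [l] else ofList [j, l - j]

/-- The map `f` from the paper: `f(i) = (k - l + d·i)₊` for `0 ≤ i ≤ k-r-1` and
`f(i) = (k - (d+1)(k-i))₊` for `k-r ≤ i ≤ k-1` (truncated ℕ-subtraction realizes
the positive part). -/
def fMap (k l d r : ℕ) (i : ℕ) : ℕ :=
  if i < k - r then k + d * i - l else k - (d + 1) * (k - i)

/-- The algorithm `Ψ = φ_k^{l-k} ∘ φ_l^{dr + k·d(d-1)/2} ∘ φ_k^{k-r}` acting on
`l`-configurations. -/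
noncomputable def Psi (k l d r : ℕ) (X : ℕ → ℕ) : ℕ → ℕ :=
  (moveFin k)^[l - k] ((moveFin l)^[d * r + k * (d * (d - 1)) / 2] ((moveFin k)^[k - r] X))



/-! ### Height functions -/

/-- One move `φ_k` on height functions. A configuration placed at absolute positions on `ℤ` is
encoded by `G p`, the number of balls at positions `≥ p`. The new ball lands one step to the right
of the `k`-th ball, so it is counted at `p` exactly when `k ≤ G (p - 1)`; deleting the leftmost
ball truncates `G` at the total `l`. -/
def stepG (l k : ℕ) (G : ℤ → ℕ) : ℤ → ℕ :=
  fun p => min l (G p + if k ≤ G (p - 1) then 1 else 0)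

/-- The properties of height functions that all moves preserve. -/
structure Good (l : ℕ) (G : ℤ → ℕ) : Prop where
  anti : ∀ p q, p ≤ q → G q ≤ G p
  le : ∀ p, G p ≤ l

lemma Good.step {l : ℕ} {G : ℤ → ℕ} (h : Good l G) (k : ℕ) : Good l (stepG l k G) := by
  refine ⟨fun p q hpq => ?_, fun p => min_le_left _ _⟩
  have h1 := h.anti p q hpq
  have h2 := h.anti (p - 1) (q - 1) (by lia)
  unfold stepG
  split_ifs <;> lia

lemma Good.iter {l : ℕ} {G : ℤ → ℕ} (h : Good l G) (k n : ℕ) : Good l ((stepG l k)^[n] G) := by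
  induction n with
  | zero => exact h
  | succ n ih => rw [Function.iterate_succ_apply']; exact ih.step k

lemma Good.le_step {l : ℕ} {G : ℤ → ℕ} (h : Good l G) (k : ℕ) (p : ℤ) :
    G p ≤ stepG l k G p := by
  have := h.le p
  unfold stepG; split_ifs <;> lia

lemma Good.le_iter {l : ℕ} {G : ℤ → ℕ} (h : Good l G) (k n : ℕ) (p : ℤ) :
    G p ≤ (stepG l k)^[n] G p := by
  induction n with
  | zero => exact le_rfl
  | succ n ih =>
    rw [Function.iterate_succ_apply']
    exact ih.trans ((h.iter k n).le_step k p)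

/-- Once the left neighbour has height at least `k`, the height grows by one at each move. -/
lemma Good.iter_inc {l k : ℕ} {G : ℤ → ℕ} (h : Good l G) {p : ℤ} (hp : k ≤ G (p - 1)) (n : ℕ) :
    (stepG l k)^[n] G p = min l (G p + n) := by
  induction n with
  | zero => have := h.le p; simp only [Function.iterate_zero, id]; lia
  | succ n ih =>
    rw [Function.iterate_succ_apply']
    have h1 := h.le_iter k n (p - 1)
    unfold stepG at *
    rw [if_pos (hp.trans h1), ih]
    lia

/-- The height function all of whose bins, read from the right, contain `k` balls except for
the rightmost one. These are the distinguished configurations `X_i`. -/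
def xst (l k : ℕ) (c : ℤ) : ℤ → ℕ := fun p => min l (c - k * p).toNat

lemma good_xst (l k : ℕ) (c : ℤ) : Good l (xst l k c) := by
  refine ⟨fun p q hpq => ?_, fun p => min_le_left _ _⟩
  have : (k : ℤ) * p ≤ k * q := mul_le_mul_of_nonneg_left hpq (by positivity)
  unfold xst; lia

/-- On the distinguished configurations, `φ_k` increments the parameter. -/
lemma step_xst {l k : ℕ} (hkl : k ≤ l) (hk : 1 ≤ k) (c : ℤ) :
    stepG l k (xst l k c) = xst l k (c + 1) := by
  funext p
  unfold stepG xst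
  have : (k : ℤ) * (p - 1) = k * p - k := by ring
  rw [this]
  generalize (k : ℤ) * p = x
  split_ifs <;> lia

lemma iter_xst {l k : ℕ} (hkl : k ≤ l) (hk : 1 ≤ k) (c : ℤ) (n : ℕ) :
    (stepG l k)^[n] (xst l k c) = xst l k (c + n) := by
  induction n with
  | zero => simp
  | succ n ih =>
    rw [Function.iterate_succ_apply', ih, step_xst hkl hk]
    push_cast; congr 1; ring

/-- If the `k` rightmost balls occupy at most the two rightmost bins `z - 1`, `z`, then `φ_k`
produces bins of exactly `k` balls to the right of `z`. -/
lemma iter_right {l k : ℕ} {G : ℤ → ℕ} (h : Good l G) (hkl : k ≤ l) (hk : 1 ≤ k) {z : ℤ}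
    (h1 : G (z + 1) = 0) (hz : k ≤ G (z - 1)) (n : ℕ) (p : ℤ) (hp : z < p) :
    (stepG l k)^[n] G p = xst l k (min (G z) k + n + k * z) p := by
  induction n generalizing p with
  | zero =>
    have h2 := h.anti (z + 1) p (by lia)
    have : (k : ℤ) * (z + 1) ≤ k * p := mul_le_mul_of_nonneg_left (by lia) (by positivity)
    have : (k : ℤ) * (z + 1) = k * z + k := by ring
    simp only [Function.iterate_zero, id, xst]
    lia
  | succ n ih =>
    rw [Function.iterate_succ_apply']
    unfold stepG
    change min l ((stepG l k)^[n] G p + if k ≤ (stepG l k)^[n] G (p - 1) then 1 else 0) = _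
    rw [ih p hp]
    by_cases hpz : p = z + 1
    · subst hpz
      rw [add_sub_cancel_right, h.iter_inc hz]
      unfold xst
      have : (k : ℤ) * (z + 1) = k * z + k := by ring
      rw [this]
      generalize (k : ℤ) * z = x
      split_ifs <;> lia
    · rw [ih (p - 1) (by lia)]
      unfold xst
      have : (k : ℤ) * (p - 1) = k * p - k := by ring
      rw [this]
      generalize (k : ℤ) * z = x
      generalize (k : ℤ) * p = y
      split_ifs <;> lia

/-- After `l - k` moves the part of the configuration left of `z` has been forgotten. -/
lemma iter_eq_xst {l k : ℕ} {G : ℤ → ℕ} (h : Good l G) (hkl : k ≤ l) (hk : 1 ≤ k) {z : ℤ}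
    (h1 : G (z + 1) = 0) (hz : k ≤ G (z - 1)) {n : ℕ} (hn : l - k ≤ n) :
    (stepG l k)^[n] G = xst l k (min (G z) k + n + k * z) := by
  funext p
  rcases lt_trichotomy p z with hp | hp | hp
  · rw [h.iter_inc (hz.trans (h.anti (p - 1) (z - 1) (by lia)))]
    have h2 := h.anti p (z - 1) (by lia)
    have : (k : ℤ) * p ≤ k * (z - 1) := mul_le_mul_of_nonneg_left (by lia) (by positivity)
    have : (k : ℤ) * (z - 1) = k * z - k := by ring
    unfold xst
    lia
  · subst hp
    rw [h.iter_inc hz]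
    unfold xst
    lia
  · exact iter_right h hkl hk h1 hz n p hp

/-! ### The levelling move `φ_l` -/

lemma sum_step_level {l : ℕ} {G : ℤ → ℕ} (h : Good l G) (z : ℤ) (n : ℕ)
    (hn : G (z - n) = l) (hs : ∑ m ∈ range n, G (z - m) < l * n) :
    ∑ m ∈ range n, stepG l l G (z - m) = ∑ m ∈ range n, G (z - m) + 1 := by
  induction n with
  | zero => simp at hs
  | succ n ih =>
    rw [sum_range_succ, sum_range_succ]
    rw [sum_range_succ] at hs
    have e : z - (n : ℤ) - 1 = z - ((n + 1 : ℕ) : ℤ) := by push_cast; ring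
    have e2 : stepG l l G (z - n) = min l (G (z - n) + 1) := by
      simp only [stepG]
      rw [e, hn, if_pos le_rfl]
    have hle := h.le (z - n)
    rw [e2]
    by_cases hl : G (z - n) = l
    · have : l * (n + 1) = l * n + l := by ring
      have := ih hl (by lia)
      lia
    · have : ∑ m ∈ range n, stepG l l G (z - m) = ∑ m ∈ range n, G (z - m) := by
        refine sum_congr rfl fun m hm => ?_
        have hm := mem_range.1 hm
        have h2 := h.anti (z - n) (z - m - 1) (by lia)
        have h3 := h.le (z - m)
        simp only [stepG]
        rw [if_neg (by lia)]
        lia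
      lia

/-- As long as there is room below position `z + 1`, each `φ_l` fills one unit of the total
deficit `∑ (l - G)` over positions `≤ z`, and nothing reaches `z + 1`. -/
lemma iter_level {l : ℕ} {G : ℤ → ℕ} (h : Good l G) (z : ℤ) (n : ℕ)
    (hn : G (z - n) = l) (h1 : G (z + 1) = 0) (N : ℕ)
    (hs : ∑ m ∈ range n, G (z - m) + N ≤ l * n) :
    ∑ m ∈ range n, (stepG l l)^[N] G (z - m) = ∑ m ∈ range n, G (z - m) + N ∧
      (stepG l l)^[N] G (z + 1) = 0 := by
  induction N with
  | zero => simp [h1]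
  | succ N ih =>
    obtain ⟨ih1, ih2⟩ := ih (by lia)
    have hg := h.iter l N
    have hn' : (stepG l l)^[N] G (z - n) = l :=
      le_antisymm (hg.le _) (hn.symm.le.trans (h.le_iter l N _))
    rw [Function.iterate_succ_apply']
    refine ⟨?_, ?_⟩
    · rw [sum_step_level hg z n hn' (by lia), ih1]; lia
    · have h0 : (stepG l l)^[N] G z < l := by
        by_contra hc
        have : ∑ m ∈ range n, (stepG l l)^[N] G (z - m) = ∑ m ∈ range n, l := by
          refine sum_congr rfl fun m _ => ?_
          have := hg.le (z - m)
          have := hg.anti (z - m) z (by lia)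
          lia
        rw [sum_const, card_range, smul_eq_mul, mul_comm] at this
        lia
      unfold stepG at *
      rw [ih2, add_sub_cancel_right, if_neg (by lia)]
      simp

/-- The number of `φ_l`-moves in `Ψ` is the deficit of `[r, k, …, k]`. -/
lemma deficit_sum {k l d r : ℕ} (hd : 1 ≤ d) (hl : l = k * d + r) :
    ∑ m ∈ range d, k * (m + 1) + (d * r + k * (d * (d - 1)) / 2) = l * d := by
  obtain ⟨e, rfl⟩ : ∃ e, d = e + 1 := ⟨d - 1, by lia⟩
  have h1 : (∑ m ∈ range (e + 1), k * (m + 1)) * 2 = k * ((e + 1) * (e + 2)) := by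
    rw [← mul_sum, sum_add_distrib, mul_assoc, add_mul, sum_range_id_mul_two]
    simp; ring_nf; simp
  have h2 : 2 ∣ (e + 1) * (e + 1 - 1) := by
    simpa [mul_comm] using (Nat.even_mul_succ_self e).two_dvd
  rw [Nat.mul_div_assoc _ h2]
  obtain ⟨q, hq⟩ := h2
  rw [hq, Nat.mul_div_cancel_left _ (by norm_num)]
  subst hl
  simp only [Nat.add_sub_cancel] at hq
  zify at *
  have : (k : ℤ) * ((e + 1) * e) = k * (2 * q) := by rw [hq]
  linarith


lemma capped_deficit {k l d r : ℕ} (hd : 1 ≤ d) (hrk : r ≤ k) (hl : l = k * d + r) (n : ℕ)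
    (hn : d ≤ n) :
    ∑ m ∈ range n, min l (k * (m + 1)) + (d * r + k * (d * (d - 1)) / 2) = l * n := by
  induction n, hn using Nat.le_induction with
  | base =>
    rw [← deficit_sum hd hl]
    congr 1
    refine sum_congr rfl fun m hm => min_eq_right ?_
    have : k * (m + 1) ≤ k * d := Nat.mul_le_mul_left _ (mem_range.1 hm)
    lia
  | succ n hn ih =>
    have : k * (d + 1) ≤ k * (n + 1) := Nat.mul_le_mul_left _ (by lia)
    have : k * (d + 1) = k * d + k := by ring
    rw [sum_range_succ, min_eq_left (by lia), mul_add, mul_one]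
    lia

/-- The last two stages `φ_k^{l-k} ∘ φ_l^{dr + kd(d-1)/2}` of `Ψ` on height functions. -/
def levelG (k l d r : ℕ) (G : ℤ → ℕ) : ℤ → ℕ :=
  (stepG l k)^[l - k] ((stepG l l)^[d * r + k * (d * (d - 1)) / 2] G)

/-- The algorithm `Ψ` on height functions. -/
def psiG (k l d r : ℕ) (G : ℤ → ℕ) : ℤ → ℕ :=
  levelG k l d r ((stepG l k)^[k - r] G)

/-- The effect of `levelG` on a configuration with bins of at most `k` balls, whose `k` rightmost
balls sit in its two rightmost bins `z - 1` and `z`: the result is distinguished, and its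
parameter depends only on the number `J` of balls that levelling leaves in the bin `z`. -/
lemma levelG_eq {k l d r : ℕ} (hk : 1 ≤ k) (hkl : k < l) (hd : 1 ≤ d) (hrk : r ≤ k)
    (hl : l = k * d + r) {G : ℤ → ℕ} (h : Good l G) {z : ℤ} (h1 : G (z + 1) = 0)
    (hz : k ≤ G (z - 1)) (hb : ∀ m : ℕ, G (z - m) ≤ k * (m + 1)) (n : ℕ) (hdn : d ≤ n)
    (hn : G (z - n) = l) :
    ∃ J : ℕ, levelG k l d r G = xst l k (min J k + (l - k : ℕ) + k * z) ∧ G z ≤ J ∧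
      ∑ m ∈ range n, G (z - m) + (d * r + k * (d * (d - 1)) / 2) + l ≤ l * n + J := by
  have hs : ∑ m ∈ range n, G (z - m) + (d * r + k * (d * (d - 1)) / 2) ≤ l * n := by
    rw [← capped_deficit hd hrk hl n hdn]
    gcongr with m
    exact le_min (h.le _) (hb m)
  obtain ⟨h2, h3⟩ := iter_level h z n hn h1 _ hs
  have hg := h.iter l (d * r + k * (d * (d - 1)) / 2)
  refine ⟨(stepG l l)^[d * r + k * (d * (d - 1)) / 2] G z, ?_, h.le_iter _ _ _, ?_⟩
  · exact iter_eq_xst hg hkl.le hk h3 (hz.trans (h.le_iter _ _ _)) le_rfl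
  · rw [← h2]
    obtain ⟨n, rfl⟩ : ∃ e, n = e + 1 := ⟨n - 1, by lia⟩
    rw [sum_range_succ']
    have : ∑ m ∈ range n, (stepG l l)^[d * r + k * (d * (d - 1)) / 2] G (z - ((m + 1 : ℕ) : ℤ))
        ≤ ∑ m ∈ range n, l := sum_le_sum fun m _ => hg.le _
    rw [sum_const, card_range, smul_eq_mul, mul_comm n l] at this
    simp only [Nat.cast_zero, sub_zero]
    rw [mul_add, mul_one]
    lia

/-- `levelG` on a distinguished configuration with `k - i` balls in its rightmost bin `z`. -/
lemma levelG_xst {k l d r : ℕ} (hk : 1 ≤ k) (hkl : k < l) (hd : 1 ≤ d) (hr : 1 ≤ r) (hrk : r ≤ k)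
    (hl : l = k * d + r) (z : ℤ) (i : ℕ) (hi : i < k) :
    ∃ i' : ℕ, i' ≤ i - 1 ∧ i' ≤ k - 1 - d ∧
      levelG k l d r (xst l k (k * (z + 1) - i)) = xst l k (l - i' + k * z) := by
  have hx : ∀ m : ℕ, xst l k (k * (z + 1) - i) (z - m) = min l (k * (m + 1) - i) := by
    intro m
    unfold xst
    have e : (k : ℤ) * (z + 1) - i - k * (z - m) = ((k * (m + 1) : ℕ) : ℤ) - i := by
      push_cast; ring
    rw [e]; lia
  have h1 : xst l k (k * (z + 1) - i) (z + 1) = 0 := by unfold xst; simp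
  obtain ⟨J, hJ, -, hJs⟩ := levelG_eq hk hkl hd hrk hl (good_xst l k (k * (z + 1) - i)) h1
    (by
      have := hx 1
      push_cast at this
      rw [this]; lia)
    (fun m => by rw [hx]; lia) (d + 1) (by lia)
    (by
      rw [hx]
      have : k * (d + 1 + 1) = k * d + 2 * k := by ring
      lia)
  have hsum : ∑ m ∈ range d, xst l k (k * (z + 1) - i) (z - m) + d * i
      = ∑ m ∈ range d, k * (m + 1) := by
    have : d * i = ∑ m ∈ range d, i := by simp
    rw [this, ← sum_add_distrib]
    refine sum_congr rfl fun m hm => ?_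
    rw [hx]
    have : k * (m + 1) ≤ k * d := Nat.mul_le_mul_left _ (mem_range.1 hm)
    have : k * (m + 1) = k * m + k := by ring
    lia
  have hN := deficit_sum (k := k) hd hl
  rw [sum_range_succ, hx] at hJs
  have e1 : k * (d + 1) = k * d + k := by ring
  have e2 : l * (d + 1) = l * d + l := by ring
  rw [e1, e2] at hJs
  -- `d (k - i) + min r (k - i) ≤ J`, whence both bounds on `k - J`
  have e3 : d * (k - i) + d * i = k * d := by rw [← mul_add, Nat.sub_add_cancel hi.le, mul_comm]
  have e4 : d * 1 ≤ d * (k - i) := Nat.mul_le_mul_left _ (by lia)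
  have e5 : 1 * (k - i) ≤ d * (k - i) := Nat.mul_le_mul_right _ hd
  refine ⟨k - min J k, by lia, by lia, ?_⟩
  rw [hJ]
  congr 2
  lia

/-- `Ψ` maps the distinguished configuration `X_i` to `X_{i'}` with `i' < i` or `i' = i = 0`. -/
lemma psiG_xst {k l d r : ℕ} (hk : 1 ≤ k) (hkl : k < l) (hd : 1 ≤ d) (hr : 1 ≤ r) (hrk : r ≤ k)
    (hl : l = k * d + r) (z : ℤ) (i : ℕ) (hi : i < k) :
    ∃ i' : ℕ, ∃ z' : ℤ, i' ≤ i - 1 ∧ i' ≤ k - 1 - d ∧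
      psiG k l d r (xst l k (l - i + k * z)) = xst l k (l - i' + k * z') := by
  obtain ⟨i', h1, h2, h3⟩ := levelG_xst hk hkl hd hr hrk hl (d + z) i hi
  refine ⟨i', d + z, h1, h2, ?_⟩
  rw [← h3, psiG, iter_xst hkl.le hk]
  congr 2
  subst hl
  push_cast [hrk]
  ring

lemma psiG_iter_xst {k l d r : ℕ} (hk : 1 ≤ k) (hkl : k < l) (hd : 1 ≤ d) (hr : 1 ≤ r)
    (hrk : r ≤ k) (hl : l = k * d + r) (n : ℕ) (z : ℤ) (i : ℕ) (hi : i < k) (hin : i ≤ n) :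
    ∃ z' : ℤ, (psiG k l d r)^[n] (xst l k (l - i + k * z)) = xst l k (l + k * z') := by
  induction n generalizing z i with
  | zero =>
    obtain rfl : i = 0 := by lia
    exact ⟨z, by simp⟩
  | succ n ih =>
    obtain ⟨i', z', h1, -, h2⟩ := psiG_xst hk hkl hd hr hrk hl z i hi
    rw [Function.iterate_succ_apply, h2]
    exact ih z' i' (by lia) (by lia)

/-! ### The initial phase -/

lemma triangle_succ (a : ℕ) : (a + 1) * (a + 1 + 1) / 2 = (a + 1) + a * (a + 1) / 2 := by
  rw [show (a + 1) * (a + 1 + 1) = a * (a + 1) + (a + 1) * 2 by ring,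
    Nat.add_mul_div_right _ _ (by norm_num)]
  lia

/-- If the heights grow at least linearly to the left from `J` at position `0`, the `k`-th ball
reaches position `-s` in a triangular number of moves. -/
lemma reach {l k : ℕ} {G : ℤ → ℕ} (h : Good l G) (hkl : k ≤ l) (J : ℕ)
    (hJ : ∀ s : ℕ, min l (s + J) ≤ G (-s)) (a s : ℕ) (has : k ≤ a + s + J) :
    k ≤ (stepG l k)^[a * (a + 1) / 2] G (-s) := by
  induction a generalizing s with
  | zero =>
    have := hJ s
    simp only [zero_mul, Nat.zero_div, Function.iterate_zero, id]
    lia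
  | succ a ih =>
    have h1 := ih (s + 1) (by lia)
    rw [triangle_succ, Function.iterate_add_apply, (h.iter k _).iter_inc]
    · have := h.le_iter k (a * (a + 1) / 2) (-s)
      have := hJ s
      lia
    · convert h1 using 2
      push_cast; ring

/-- After at least `l - k` moves `φ_k`, every bin contains at most `k` balls. -/
lemma bins_le {l k : ℕ} {G : ℤ → ℕ} (h : Good l G) (n : ℕ) (hn : l - k ≤ n) (p : ℤ) :
    (stepG l k)^[n] G p ≤ k + (stepG l k)^[n] G (p + 1) := by
  have key : ∀ n : ℕ, (stepG l k)^[n] G p ≤ k + (stepG l k)^[n] G (p + 1) ∨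
      min l n ≤ (stepG l k)^[n] G (p + 1) := by
    intro n
    induction n with
    | zero => right; simp
    | succ n ih =>
      rw [Function.iterate_succ_apply']
      have := (h.iter k n).le p
      generalize (stepG l k)^[n] G = F at *
      unfold stepG
      rw [add_sub_cancel_right]
      split_ifs <;> lia
  have := (h.iter k n).le p
  rcases key n with h | h <;> lia


/-- The first application of `Ψ` after `Ψ₁` yields a distinguished configuration `X_i`, with
`i ≤ k - 2` except possibly when `d ≥ 2` and `k ≥ 3`. -/
lemma first_level {k l d r : ℕ} (hk : 2 ≤ k) (hkl : k < l) (hd : 1 ≤ d) (hr : 1 ≤ r) (hrk : r ≤ k)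
    (hl : l = k * d + r) {G : ℤ → ℕ} (h : Good l G) (h1 : G 1 = 0) (h0 : 1 ≤ G 0)
    (hJ : ∀ s : ℕ, min l (s + G 0) ≤ G (-s)) (n₀ : ℕ) (hn₀ : G (-n₀) = l) :
    ∃ i : ℕ, ∃ z : ℤ, i < k ∧ (i ≤ k - 2 ∨ (2 ≤ d ∧ 3 ≤ k)) ∧
      levelG k l d r ((stepG l k)^[(k - r) + max l (k * (k - 1) / 2)] G) =
        xst l k (l - i + k * z) := by
  obtain ⟨e, rfl⟩ : ∃ e, k = e + 2 := ⟨k - 2, by lia⟩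
  have htri : (e + 2) * (e + 2 - 1) / 2 = (e + 1) + e * (e + 1) / 2 := by
    rw [← triangle_succ]; congr 1; rw [mul_comm]; rfl
  -- `τ` is the first time at which the `k`-th ball is at position `-1` or to its right
  have hr1 : e + 2 ≤ (stepG l (e + 2))^[e * (e + 1) / 2] G (-1) := by
    have := reach h hkl.le 1 (fun s => le_trans (by lia) (hJ s)) e 1 (by lia)
    simpa using this
  have hex : ∃ τ, e + 2 ≤ (stepG l (e + 2))^[τ] G (-1) := ⟨_, hr1⟩
  classical
  obtain ⟨τ, hτ, hmin⟩ : ∃ τ, e + 2 ≤ (stepG l (e + 2))^[τ] G (-1) ∧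
      ∀ t, e + 2 ≤ (stepG l (e + 2))^[t] G (-1) → τ ≤ t :=
    ⟨Nat.find hex, Nat.find_spec hex, fun t ht => Nat.find_min' hex ht⟩
  have hτ1 := hmin _ hr1
  -- until time `τ` nothing happens at positions `0` and `1`
  have hstay : ∀ t ≤ τ, (stepG l (e + 2))^[t] G 0 = G 0 ∧ (stepG l (e + 2))^[t] G 1 = 0 := by
    intro t
    induction t with
    | zero => intro _; exact ⟨rfl, h1⟩
    | succ t ih =>
      intro ht
      obtain ⟨i1, i2⟩ := ih (by lia)
      have h2 : ¬ e + 2 ≤ (stepG l (e + 2))^[t] G (-1) := fun hc => by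
        have := hmin _ hc; lia
      have h3 := (h.iter (e + 2) t).anti (-1) 0 (by norm_num)
      have h4 := h.le 0
      rw [Function.iterate_succ_apply']
      generalize (stepG l (e + 2))^[t] G = F at *
      constructor
      · simp only [stepG, zero_sub]; rw [if_neg h2]; lia
      · simp only [stepG, sub_self]; rw [if_neg (by lia)]; lia
  obtain ⟨s0, s1⟩ := hstay τ le_rfl
  obtain ⟨t, ht⟩ : ∃ t, (e + 2 - r) + max l ((e + 2) * (e + 2 - 1) / 2) = t + τ :=
    ⟨_, (Nat.sub_add_cancel (by lia)).symm⟩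
  have hg := h.iter (e + 2) τ
  have hbins := bins_le h (k := e + 2) (t + τ) (by lia)
  have hfar : ∀ n : ℕ, n₀ ≤ n → (stepG l (e + 2))^[t + τ] G (-n) = l := by
    intro n hn
    refine le_antisymm ((h.iter _ _).le _) ?_
    have := h.le_iter (e + 2) (t + τ) (-n)
    have := h.anti (-n) (-n₀) (by lia)
    lia
  rw [ht]
  rw [Function.iterate_add_apply] at hbins hfar ⊢
  have hzero : (-1 : ℤ) = 0 - 1 := by norm_num
  rw [hzero] at hτ
  have s1' : (stepG l (e + 2))^[τ] G (0 + 1) = 0 := by simpa using s1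
  by_cases htl : l - (e + 2) ≤ t
  · -- the configuration is already distinguished
    rw [iter_eq_xst hg hkl.le (by lia) s1' hτ htl]
    generalize ((min ((stepG l (e + 2))^[τ] G 0) (e + 2) : ℕ) : ℤ) + t + ((e + 2 : ℕ) : ℤ) * 0 = c
    have hm0 := Int.emod_nonneg (-c) (b := ((e + 2 : ℕ) : ℤ)) (by lia)
    have hm1 := Int.emod_lt_of_pos (-c) (b := ((e + 2 : ℕ) : ℤ)) (by lia)
    have hm2 := Int.emod_add_mul_ediv (-c) ((e + 2 : ℕ) : ℤ)
    obtain ⟨i', -, hi2, hi3⟩ := levelG_xst (by lia) hkl hd hr hrk hl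
      (-((-c) / ((e + 2 : ℕ) : ℤ)) - 1) ((-c) % ((e + 2 : ℕ) : ℤ)).toNat (by lia)
    refine ⟨i', -((-c) / ((e + 2 : ℕ) : ℤ)) - 1, by lia, Or.inl (by lia), ?_⟩
    rw [← hi3]
    congr 2
    rw [Int.toNat_of_nonneg hm0, sub_add_cancel, mul_neg]
    linarith
  · have hR := iter_right hg hkl.le (by lia) s1' hτ t
    have hI0 := hg.iter_inc hτ t
    have hI1 := hg.iter_inc (p := -1) (hτ.trans (hg.anti (-1 - 1) (0 - 1) (by norm_num))) t
    have hH := hg.iter (e + 2) t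
    rw [s0] at hR hI0
    generalize (stepG l (e + 2))^[t] ((stepG l (e + 2))^[τ] G) = H at *
    -- `P` is the rightmost position of `H`
    obtain ⟨P, j, hj0, hj1, hPj⟩ : ∃ P j : ℕ, 1 ≤ j ∧ j ≤ e + 2 ∧
        min (G 0) (e + 2) + t = (e + 2) * P + j := by
      refine ⟨(min (G 0) (e + 2) + t - 1) / (e + 2), (min (G 0) (e + 2) + t - 1) % (e + 2) + 1,
        by lia, Nat.mod_lt _ (by lia), ?_⟩
      have := Nat.div_add_mod (min (G 0) (e + 2) + t - 1) (e + 2)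
      lia
    have hPj' : ((min (G 0) (e + 2) : ℕ) : ℤ) + t = ((e + 2 : ℕ) : ℤ) * P + j := by
      exact_mod_cast hPj
    have hPos : ∀ p : ℤ, 0 < p → H p = min l ((((e + 2 : ℕ) : ℤ) * (P - p) + j).toNat) := by
      intro p hp
      rw [hR p hp, xst]
      congr 2
      push_cast at hPj' ⊢
      linear_combination hPj'
    have hP1 : H (P + 1) = 0 := by
      rw [hPos _ (by lia)]
      have : ((e + 2 : ℕ) : ℤ) * (P - (P + 1)) = - (e + 2 : ℕ) := by ring
      rw [this]; lia
    have hP0 : 1 ≤ H P ∧ (P = 0 → H P = min l (G 0 + t)) := by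
      rcases Nat.eq_zero_or_pos P with hP | hP
      · subst hP; simp only [Nat.cast_zero]; rw [hI0]; exact ⟨by lia, fun _ => rfl⟩
      · rw [hPos _ (by lia)]; simp only [sub_self, mul_zero]; exact ⟨by lia, by lia⟩
    have hPm : e + 2 ≤ H (P - 1) := by
      rcases Nat.lt_or_ge P 2 with hP | hP
      · interval_cases P
        · simp only [Nat.cast_zero, zero_sub]
          simp only [zero_sub] at hτ
          rw [hI1]; lia
        · simp only [Nat.cast_one, sub_self]
          rw [hI0]; lia
      · rw [hPos _ (by lia)]
        have : ((e + 2 : ℕ) : ℤ) * (P - (P - 1)) = (e + 2 : ℕ) := by ring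
        rw [this]; lia
    have hb : ∀ m : ℕ, H (P - m) ≤ (e + 2) * (m + 1) := by
      intro m
      induction m with
      | zero => have := hbins P; simp only [Nat.cast_zero, sub_zero]; lia
      | succ m ih =>
        have h2 := hbins (P - (m + 1 : ℕ))
        have h3 : (P : ℤ) - (m + 1 : ℕ) + 1 = P - m := by push_cast; ring
        rw [h3] at h2
        have : (e + 2) * (m + 1 + 1) = (e + 2) * (m + 1) + (e + 2) := by ring
        lia
    obtain ⟨J, hJ1, hJ2, -⟩ := levelG_eq (by lia) hkl hd hrk hl hH hP1 hPm hb (n₀ + P + d)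
      (by lia) (by
        have := hfar (n₀ + d) (by lia)
        convert this using 2
        push_cast; ring)
    refine ⟨e + 2 - min J (e + 2), P, by lia, ?_, ?_⟩
    · by_cases he : e = 0
      · subst he
        simp only [zero_add, zero_mul, Nat.zero_div] at hτ1
        lia
      · rcases Nat.lt_or_ge d 2 with hd2 | hd2
        · left
          obtain rfl : d = 1 := by lia
          -- here `r = k` and `t = k - 1`
          suffices 2 ≤ H P by lia
          have hG0 : G 0 = 1 := by
            by_contra hc
            obtain ⟨f, rfl⟩ : ∃ f, e = f + 1 := ⟨e - 1, by lia⟩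
            have := reach h hkl.le 2 (fun s => le_trans (by lia) (hJ s)) f 1 (by lia)
            have := hmin _ (by simpa using this)
            rw [triangle_succ f] at htri
            lia
          have hP : P = 0 := by
            by_contra hc
            have : (e + 2) * 1 ≤ (e + 2) * P := Nat.mul_le_mul_left _ (by lia)
            lia
          rw [hP0.2 hP]
          lia
        · exact Or.inr ⟨hd2, by lia⟩
    · rw [hJ1]
      congr 2
      lia

/-- The coupling on height functions. -/
lemma coupling_G {k l d r : ℕ} (hk : 2 ≤ k) (hkl : k < l) (hd : 1 ≤ d) (hr : 1 ≤ r) (hrk : r ≤ k)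
    (hl : l = k * d + r) {G : ℤ → ℕ} (h : Good l G) (h1 : G 1 = 0) (h0 : 1 ≤ G 0)
    (hJ : ∀ s : ℕ, min l (s + G 0) ≤ G (-s)) (n₀ : ℕ) (hn₀ : G (-n₀) = l) :
    ∃ z : ℤ, (psiG k l d r)^[k - 1] ((stepG l k)^[max l (k * (k - 1) / 2)] G) =
      xst l k (l + k * z) := by
  obtain ⟨i, z, hi, hi2, hG⟩ := first_level hk hkl hd hr hrk hl h h1 h0 hJ n₀ hn₀
  rw [Function.iterate_add_apply] at hG
  change psiG k l d r _ = _ at hG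
  rw [show k - 1 = (k - 2) + 1 by lia, Function.iterate_succ_apply,
    show k - 2 + 1 = k - 1 by lia, hG]
  rcases hi2 with hi2 | ⟨hd2, hk3⟩
  · exact psiG_iter_xst (by lia) hkl hd hr hrk hl _ z i hi hi2
  · obtain ⟨i', z', -, h2, h3⟩ := psiG_xst (by lia) hkl hd hr hrk hl z i hi
    rw [show k - 2 = (k - 3) + 1 by lia, Function.iterate_succ_apply, h3]
    exact psiG_iter_xst (by lia) hkl hd hr hrk hl _ z' i' (by lia) (by lia)


/-! ### Configurations as height functions -/

lemma binSum_zero (X : ℕ → ℕ) : binSum X 0 = 0 := rfl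

lemma binSum_succ (X : ℕ → ℕ) (t : ℕ) : binSum X (t + 1) = binSum X t + X t :=
  sum_range_succ _ _

lemma binSum_mono (X : ℕ → ℕ) {s t : ℕ} (h : s ≤ t) : binSum X s ≤ binSum X t :=
  sum_le_sum_of_subset (range_mono h)

lemma binSum_const {X : ℕ → ℕ} {p t : ℕ} (h : ∀ t, p ≤ t → X t = 0) (hpt : p ≤ t) :
    binSum X t = binSum X p := by
  induction t, hpt using Nat.le_induction with
  | base => rfl
  | succ t ht ih => rw [binSum_succ, ih, h t ht, add_zero]

/-- Deleting the leftmost ball truncates the partial sums. -/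
lemma removeLeft_spec {n : ℕ} (hn : 1 ≤ n) {Y : ℕ → ℕ} (hY : IsNConf (n + 1) Y) :
    IsNConf n (removeLeft Y) ∧ ∀ t, binSum (removeLeft Y) t = min n (binSum Y t) := by
  obtain ⟨p, hp, hpos, hzero, hsum⟩ := hY
  obtain ⟨q, rfl⟩ : ∃ q, p = q + 1 := ⟨p - 1, by lia⟩
  have hsup : sSup {b : ℕ | 0 < Y b} = q := by
    refine IsGreatest.csSup_eq ⟨hpos q (by lia), fun b hb => ?_⟩
    by_contra hc
    have := hzero b (by lia)
    have : 0 < Y b := hb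
    lia
  have hdef : ∀ t, removeLeft Y t = if t = q then Y t - 1 else Y t := by
    intro t; rw [removeLeft, hsup]
  have hq := hpos q (by lia)
  have hb1 : ∀ t ≤ q, binSum (removeLeft Y) t = binSum Y t := by
    intro t ht
    refine sum_congr rfl fun m hm => ?_
    have := mem_range.1 hm
    rw [hdef, if_neg (by lia)]
  have hz2 : ∀ t, q + 1 ≤ t → removeLeft Y t = 0 := fun t ht => by
    rw [hdef, if_neg (by lia), hzero t ht]
  have hb2 : ∀ t, q + 1 ≤ t → binSum (removeLeft Y) t = n := by
    intro t ht
    rw [binSum_const hz2 ht, binSum_succ, hb1 q le_rfl, hdef, if_pos rfl]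
    rw [binSum_succ] at hsum
    lia
  refine ⟨?_, fun t => ?_⟩
  · by_cases h1 : Y q = 1
    · have hq0 : q ≠ 0 := by
        rintro rfl
        rw [binSum_succ, binSum_zero] at hsum
        lia
      refine ⟨q, by lia, fun t ht => ?_, fun t ht => ?_, ?_⟩
      · rw [hdef, if_neg (by lia)]; exact hpos t (by lia)
      · rcases eq_or_lt_of_le ht with rfl | ht
        · rw [hdef, if_pos rfl, h1]
        · exact hz2 t ht
      · rw [hb1 q le_rfl]
        rw [binSum_succ] at hsum
        lia
    · refine ⟨q + 1, by lia, fun t ht => ?_, hz2, hb2 _ le_rfl⟩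
      have := hpos t ht
      rw [hdef]
      split_ifs with h
      · subst h; lia
      · exact this
  · rcases Nat.lt_or_ge q t with ht | ht
    · rw [hb2 t ht, binSum_const hzero ht, hsum]; lia
    · rw [hb1 t ht]
      have := binSum_mono Y ht
      rw [binSum_succ] at hsum
      lia

/-- The height function of `X` with its rightmost bin placed at position `P`. -/
def toG (X : ℕ → ℕ) (P : ℤ) : ℤ → ℕ := fun p => binSum X (P + 1 - p).toNat

/-- `G` is the height function of the `l`-configuration `X`, up to a translation. -/
def HasHeight (l : ℕ) (G : ℤ → ℕ) (X : ℕ → ℕ) : Prop := IsNConf l X ∧ ∃ P : ℤ, G = toG X P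

lemma HasHeight.moveFin_step {l k : ℕ} (hk : 1 ≤ k) (hkl : k ≤ l) {G : ℤ → ℕ} {X : ℕ → ℕ} (h : HasHeight l G X) :
    HasHeight l (stepG l k G) (moveFin k X) := by
  obtain ⟨⟨p, hp, hpos, hzero, hsum⟩, P, rfl⟩ := h
  by_cases hX : k ≤ X 0
  · have hdef : ∀ t, move k X t = if t = 0 then 1 else X (t - 1) := fun t => by
      rw [move, if_pos hX]
    have hb : ∀ t, binSum (move k X) (t + 1) = binSum X t + 1 := by
      intro t
      induction t with
      | zero => rw [binSum_succ, binSum_zero, binSum_zero, hdef, if_pos rfl]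
      | succ t ih =>
        rw [binSum_succ, ih, binSum_succ, hdef, if_neg (by lia), Nat.add_sub_cancel]; lia
    have hconf : IsNConf (l + 1) (move k X) := by
      refine ⟨p + 1, by lia, fun t ht => ?_, fun t ht => ?_, by rw [hb, hsum]⟩
      · rw [hdef]
        split_ifs
        · exact one_pos
        · exact hpos _ (by lia)
      · rw [hdef, if_neg (by lia)]; exact hzero _ (by lia)
    obtain ⟨hc, hs⟩ := removeLeft_spec (hk.trans hkl) hconf
    refine ⟨hc, P + 1, ?_⟩
    funext x
    change min l (binSum X (P + 1 - x).toNat +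
      if k ≤ binSum X (P + 1 - (x - 1)).toNat then 1 else 0) =
        binSum (removeLeft (move k X)) (P + 1 + 1 - x).toNat
    rw [hs]
    by_cases hx : x ≤ P + 1
    · have e1 : (P + 1 + 1 - x).toNat = (P + 1 - x).toNat + 1 := by lia
      have e2 : (P + 1 - (x - 1)).toNat = (P + 1 - x).toNat + 1 := by lia
      have e3 := binSum_mono X (show 0 + 1 ≤ (P + 1 - x).toNat + 1 by lia)
      rw [binSum_succ X 0, binSum_zero] at e3
      rw [e1, e2, hb, if_pos (by lia)]
    · have e1 : (P + 1 + 1 - x).toNat = 0 := by lia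
      have e2 : (P + 1 - (x - 1)).toNat = 0 := by lia
      have e3 : (P + 1 - x).toNat = 0 := by lia
      rw [e1, e2, e3, binSum_zero, binSum_zero, if_neg (by lia)]
  · have hne : {b : ℕ | k ≤ binSum X (b + 1)}.Nonempty := by
      refine ⟨p, ?_⟩
      have := binSum_mono X (show p ≤ p + 1 by lia)
      change k ≤ _
      lia
    obtain ⟨b, hb⟩ : ∃ b, sInf {b : ℕ | k ≤ binSum X (b + 1)} = b := ⟨_, rfl⟩
    have hb1 : k ≤ binSum X (b + 1) := hb ▸ Nat.sInf_mem hne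
    have hb2 : ∀ t, k ≤ binSum X (t + 1) → b ≤ t := fun t ht => hb ▸ Nat.sInf_le ht
    have hbiff : ∀ t, k ≤ binSum X (t + 1) ↔ b ≤ t := fun t =>
      ⟨hb2 t, fun ht => hb1.trans (binSum_mono X (by lia))⟩
    have hb0 : b ≠ 0 := by
      rintro rfl
      rw [binSum_succ, binSum_zero] at hb1
      lia
    have hbp : b < p := by
      have := hb2 (p - 1) (by rw [Nat.sub_add_cancel hp, hsum]; exact hkl)
      lia
    have hdef : ∀ t, move k X t = if t = b - 1 then X t + 1 else X t := fun t => by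
      rw [move, if_neg hX, hb]
    have hbs : ∀ t, binSum (move k X) t = binSum X t + if b ≤ t then 1 else 0 := by
      intro t
      induction t with
      | zero => rw [binSum_zero, binSum_zero, if_neg (by lia)]
      | succ t ih =>
        rw [binSum_succ, binSum_succ, ih, hdef]
        split_ifs <;> lia
    have hconf : IsNConf (l + 1) (move k X) := by
      refine ⟨p, hp, fun t ht => ?_, fun t ht => ?_, by rw [hbs, hsum, if_pos hbp.le]⟩
      · rw [hdef]
        have := hpos t ht
        split_ifs <;> lia
      · rw [hdef, if_neg (by lia)]; exact hzero _ ht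
    obtain ⟨hc, hs⟩ := removeLeft_spec (hk.trans hkl) hconf
    refine ⟨hc, P, ?_⟩
    funext x
    change min l (binSum X (P + 1 - x).toNat +
      if k ≤ binSum X (P + 1 - (x - 1)).toNat then 1 else 0) =
        binSum (removeLeft (move k X)) (P + 1 - x).toNat
    rw [hs, hbs]
    by_cases hx : x ≤ P + 1
    · have e2 : (P + 1 - (x - 1)).toNat = (P + 1 - x).toNat + 1 := by lia
      simp only [e2, hbiff]
    · have e2 : (P + 1 - (x - 1)).toNat = 0 := by lia
      have e3 : (P + 1 - x).toNat = 0 := by lia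
      rw [e2, e3, binSum_zero, if_neg (by lia), if_neg (by lia)]

lemma HasHeight.iter {l k : ℕ} (hk : 1 ≤ k) (hkl : k ≤ l) {G : ℤ → ℕ} {X : ℕ → ℕ} (h : HasHeight l G X)
    (n : ℕ) : HasHeight l ((stepG l k)^[n] G) ((moveFin k)^[n] X) := by
  induction n with
  | zero => exact h
  | succ n ih =>
    rw [Function.iterate_succ_apply', Function.iterate_succ_apply']
    exact ih.moveFin_step hk hkl

lemma HasHeight.psi_iter {k l d r : ℕ} (hk : 1 ≤ k) (hkl : k ≤ l) {G : ℤ → ℕ} {X : ℕ → ℕ}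
    (h : HasHeight l G X) (n : ℕ) : HasHeight l ((psiG k l d r)^[n] G) ((Psi k l d r)^[n] X) := by
  induction n with
  | zero => exact h
  | succ n ih =>
    rw [Function.iterate_succ_apply', Function.iterate_succ_apply']
    exact ((ih.iter hk hkl _).iter (hk.trans hkl) le_rfl _).iter hk hkl _

lemma distConf_zero (k d r t : ℕ) :
    distConf k d r 0 t = if t = 0 then r else if t ≤ d then k else 0 := by
  rw [distConf, if_pos rfl, ofList, List.reverse_append, List.reverse_replicate]
  cases t with
  | zero => simp
  | succ t =>
    simp only [List.reverse_singleton, List.singleton_append, List.getD_cons_succ]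
    rw [if_neg (by lia)]
    split_ifs with h
    · rw [List.getD_eq_getElem _ _ (by simpa using h)]; simp
    · rw [List.getD_eq_default _ _ (by simp; lia)]

/-- The configuration with height function `xst l k (l + k * z)` is `X_0 = [k, …, k, r]`. -/
lemma eq_distConf {k l d r : ℕ} (hk : 1 ≤ k) (hr : 1 ≤ r) (hrk : r ≤ k) (hl : l = k * d + r)
    {X : ℕ → ℕ} {z : ℤ} (h : HasHeight l (xst l k (l + k * z)) X) : X = distConf k d r 0 := by
  obtain ⟨⟨p, hp, hpos, -, -⟩, P, hP⟩ := h
  have hval : ∀ x : ℤ, xst l k (l + k * z) x = min l (k * (d + z - x) + r).toNat := by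
    intro x
    unfold xst
    congr 2
    subst hl
    push_cast
    ring
  -- both sides vanish exactly to the right of the rightmost bin, which determines `P`
  have hPz : P = d + z := by
    have a1 := congrFun hP (P + 1)
    have a2 := congrFun hP P
    rw [hval] at a1 a2
    simp only [toG, sub_self, Int.toNat_zero, binSum_zero] at a1
    have hX0 := hpos 0 (by lia)
    have e : (P + 1 - P).toNat = 0 + 1 := by lia
    simp only [toG] at a2
    rw [e, binSum_succ, binSum_zero] at a2
    rcases lt_trichotomy P (d + z) with hlt | heq | hgt
    · have : (k : ℤ) * 0 ≤ k * (d + z - (P + 1)) := mul_le_mul_of_nonneg_left (by lia) (by positivity)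
      lia
    · exact heq
    · have : (k : ℤ) * (d + z - P) ≤ k * (-1) := mul_le_mul_of_nonneg_left (by lia) (by positivity)
      lia
  have hsum : ∀ t : ℕ, binSum X (t + 1) = min l (k * t + r) := by
    intro t
    have a := congrFun hP (P - t)
    rw [hval] at a
    simp only [toG] at a
    have e1 : (P + 1 - (P - t)).toNat = t + 1 := by lia
    have e2 : (k : ℤ) * (d + z - (P - t)) + r = ((k * t + r : ℕ) : ℤ) := by
      rw [hPz]; push_cast; ring
    rw [e1, e2, Int.toNat_natCast] at a
    exact a.symm
  funext t
  rw [distConf_zero]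
  cases t with
  | zero =>
    have := hsum 0
    rw [binSum_succ, binSum_zero] at this
    rw [if_pos rfl]
    lia
  | succ t =>
    have a := hsum (t + 1)
    rw [binSum_succ, hsum t] at a
    have e : k * (t + 1) = k * t + k := by ring
    rw [if_neg (by lia)]
    split_ifs with htd
    · have : k * (t + 1) ≤ k * d := Nat.mul_le_mul_left _ htd
      lia
    · have : k * d ≤ k * t := Nat.mul_le_mul_left _ (by lia)
      lia

lemma coupling {k l d r : ℕ} (hk : 2 ≤ k) (hkl : k < l) (hd : 1 ≤ d) (hr : 1 ≤ r) (hrk : r ≤ k)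
    (hl : l = k * d + r) {X : ℕ → ℕ} (hX : IsNConf l X) :
    (Psi k l d r)^[k - 1] ((moveFin k)^[max l (k * (k - 1) / 2)] X) = distConf k d r 0 := by
  have hrep : HasHeight l (toG X 0) X := ⟨hX, 0, rfl⟩
  obtain ⟨p, hp, hpos, hzero, hsum⟩ := hX
  have hle : ∀ t, binSum X t ≤ l := fun t => by
    rcases le_total t p with h | h
    · exact hsum ▸ binSum_mono X h
    · exact (binSum_const hzero h).trans hsum |>.le
  have hG0 : toG X 0 0 = X 0 := by
    have : ((0 : ℤ) + 1 - 0).toNat = 0 + 1 := rfl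
    rw [toG, this, binSum_succ, binSum_zero, zero_add]
  have hGs : ∀ s : ℕ, toG X 0 (-s) = binSum X (s + 1) := fun s => by
    have : ((0 : ℤ) + 1 - (-s)).toNat = s + 1 := by lia
    rw [toG, this]
  have hgood : Good l (toG X 0) :=
    ⟨fun a b hab => binSum_mono X (by lia), fun _ => hle _⟩
  obtain ⟨z, hz⟩ := coupling_G hk hkl hd hr hrk hl hgood rfl (by rw [hG0]; exact hpos 0 (by lia))
    (fun s => by
      rw [hGs, hG0]
      induction s with
      | zero => rw [binSum_succ, binSum_zero]; lia
      | succ s ih =>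
        rw [binSum_succ]
        rcases Nat.lt_or_ge (s + 1) p with h | h
        · have := hpos (s + 1) h; lia
        · rw [binSum_const hzero h]; lia)
    p (by rw [hGs, binSum_const hzero (by lia), hsum])
  have := (hrep.iter (k := k) (by lia) hkl.le (max l (k * (k - 1) / 2))).psi_iter
    (d := d) (r := r) (k := k) (by lia) hkl.le (k - 1)
  rw [hz] at this
  exact eq_distConf (by lia) hr hrk hl this


/-- Main coupling on `l`-configurations: with
`Ψ₁ = φ_k^{max(l, k(k-1)/2)}` and `Ψ₂ = Ψ^{k-1}`, one has `Ψ₂(Ψ₁(X)) = X_0` for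
every `l`-configuration `X`; in particular `Ψ₂Ψ₁` couples the first `l` balls on
`l`-configurations. -/
theorem main_coupling_on_l_configurations (k l d r : ℕ) (hk : 2 ≤ k) (hkl : k < l)
    (hd : 1 ≤ d) (hr : 1 ≤ r) (hrk : r ≤ k) (hl : l = k * d + r) :
    (∀ X : ℕ → ℕ, IsNConf l X →
      (Psi k l d r)^[k - 1] ((moveFin k)^[max l (k * (k - 1) / 2)] X) =
        distConf k d r 0) ∧
    (∀ X Y : ℕ → ℕ, IsNConf l X → IsNConf l Y →
      proj l ((Psi k l d r)^[k - 1] ((moveFin k)^[max l (k * (k - 1) / 2)] X)) =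
        proj l ((Psi k l d r)^[k - 1] ((moveFin k)^[max l (k * (k - 1) / 2)] Y))) := by
  have key : ∀ X : ℕ → ℕ, IsNConf l X → _ := fun X hX => coupling hk hkl hd hr hrk hl hX
  exact ⟨key, fun X Y hX hY => by rw [key X hX, key Y hY]⟩
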